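/- arXiv:1402.5148 — 13 statements merged into one kernel-verified Lean document; each statement's English description precedes it below -/
import Mathlib

section
/- Let ε ∈ {−1, 1}. A prime p belongs to 𝒫_ε if and only if p belongs to 𝒫_cons. In particular 𝒫_{+1} = 𝒫_{−1} = 𝒫_cons. -/
/-- `D_ε(n,m) = n^n + ε·(n−m)^(n−m)·m^m` for `ε ∈ {−1,1}` and integers `n > m ≥ 1`. -/
def trinomialD (ε : ℤ) (n m : ℕ) : ℤ :=
  (n : ℤ) ^ n + ε * ((n - m : ℕ) : ℤ) ^ (n - m) * (m : ℤ) ^ m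

/-- `x` is a nonzero `p`-th power modulo `p²`. -/
def IsNonzeroPthPower (p : ℕ) (x : ℤ) : Prop :=
  ¬ (p : ℤ) ∣ x ∧ ∃ a : ℤ, x ≡ a ^ p [ZMOD ((p : ℤ) ^ 2)]

lemma aux_pow {R : Type*} [CommRing R] (z : R) (hz : z ^ 2 = 0) (n : ℕ) :
    (1 + z) ^ n = 1 + n * z := by
  induction n with
  | zero => simp
  | succ n ih =>
    rw [pow_succ, ih]
    push_cast
    linear_combination (n : R) * hz

lemma aux_gen (p : ℕ) (hp : p.Prime) (X : ZMod (p ^ 2)) (hX : X ^ (p - 1) = 1)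
    (hY : (X + 1) ^ (p - 1) = 1) (e f : ℕ) :
    ∃ k m : ℕ, 0 < m ∧ 0 < k ∧ ¬ p ∣ m ∧ ((k + m : ℕ) : ZMod (p ^ 2)) ^ (k + m) = (X + 1) ^ f ∧
      (k : ZMod (p ^ 2)) ^ k = X ^ e ∧ (m : ZMod (p ^ 2)) ^ m = 1 := by
  have h2 := hp.two_le
  have : NeZero (p ^ 2) := ⟨by positivity⟩
  have : Fact (1 < p ^ 2) := ⟨by nlinarith⟩
  have hcop : Nat.Coprime (p ^ 2) (p - 1) := by
    apply Nat.Coprime.pow_left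
    rw [hp.coprime_iff_not_dvd]
    intro h
    have := Nat.le_of_dvd (by omega) h
    omega
  obtain ⟨k, hk1, hk2⟩ := Nat.chineseRemainder hcop X.val e
  obtain ⟨m, hm1, hm2⟩ := Nat.chineseRemainder hcop 1 (f + (p - 2) * e)
  have hkX : (k : ZMod (p ^ 2)) = X := by
    rw [(ZMod.natCast_eq_natCast_iff _ _ _).2 hk1, ZMod.natCast_zmod_val]
  have hm : (m : ZMod (p ^ 2)) = 1 := by
    rw [(ZMod.natCast_eq_natCast_iff _ _ _).2 hm1, Nat.cast_one]
  have key : ∀ (Z : ZMod (p ^ 2)), Z ^ (p - 1) = 1 → ∀ a b : ℕ, a ≡ b [MOD (p - 1)] →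
      Z ^ a = Z ^ b := by
    intro Z hZ a b hab
    rw [← Nat.mod_add_div a (p - 1), ← Nat.mod_add_div b (p - 1), pow_add, pow_add, pow_mul,
      pow_mul, hZ, one_pow, one_pow, hab]
  refine ⟨k, m, ?_, ?_, ?_, ?_, ?_, ?_⟩
  · rcases Nat.eq_zero_or_pos m with h | h
    · subst h; simp at hm
    · exact h
  · rcases Nat.eq_zero_or_pos k with h | h
    · subst h
      rw [← hkX, Nat.cast_zero, zero_pow (by omega)] at hX
      exact absurd hX zero_ne_one
    · exact h
  · intro h
    have h3 : m ≡ 1 [MOD p] := hm1.of_dvd (dvd_pow_self p two_ne_zero)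
    have h4 := (h3.dvd_iff dvd_rfl).1 h
    exact hp.one_lt.ne' (Nat.dvd_one.1 h4)
  · rw [Nat.cast_add, hkX, hm]
    apply key _ hY
    refine (hk2.add hm2).trans ?_
    obtain ⟨q, rfl⟩ : ∃ q, p = q + 2 := ⟨p - 2, by omega⟩
    have : e + (f + (q + 2 - 2) * e) = f + (q + 2 - 1) * e := by
      simp only [Nat.add_sub_cancel, show q + 2 - 1 = q + 1 by omega]; ring
    rw [this]
    simp [Nat.ModEq]
  · rw [hkX]
    exact key _ hX _ _ hk2
  · rw [hm, one_pow]

lemma aux_order (p : ℕ) (hp : p.Prime) (hodd : Odd p) (X : ZMod (p ^ 2))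
    (hX : X ^ (p - 1) = 1) : (∃ e : ℕ, X ^ e = -1) ∨ (∃ e : ℕ, (-X) ^ e = -1) := by
  have h2 := hp.two_le
  have hpos : 0 < orderOf X := orderOf_pos_iff.2 (isOfFinOrder_iff_pow_eq_one.2 ⟨p - 1, by omega, hX⟩)
  rcases Nat.even_or_odd (orderOf X) with h | h
  · left
    obtain ⟨s, hs⟩ := h
    refine ⟨s, ?_⟩
    have hne : X ^ s ≠ 1 := fun h1 => by
      have := orderOf_le_of_pow_eq_one (by omega) h1
      omega
    have hsq : X ^ s * X ^ s = 1 := by rw [← pow_add, ← hs, pow_orderOf_eq_one]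
    obtain ⟨z, hz⟩ := ZMod.intCast_surjective (X ^ s)
    rw [← hz] at hne hsq ⊢
    have hd : (p : ℤ) ^ 2 ∣ (z - 1) * (z + 1) := by
      have : (((z - 1) * (z + 1) : ℤ) : ZMod (p ^ 2)) = 0 := by
        push_cast; linear_combination hsq
      have := (ZMod.intCast_zmod_eq_zero_iff_dvd _ _).1 this
      exact_mod_cast this
    have hpI : Prime (p : ℤ) := Nat.prime_iff_prime_int.1 hp
    have toZ : ∀ w : ℤ, (p : ℤ) ^ 2 ∣ w → (w : ZMod (p ^ 2)) = 0 := fun w hw =>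
      (ZMod.intCast_zmod_eq_zero_iff_dvd _ _).2 (by exact_mod_cast hw)
    by_cases h1 : (p : ℤ) ∣ z - 1
    · by_cases h3 : (p : ℤ) ∣ z + 1
      · exfalso
        have h4 : (p : ℤ) ∣ 2 := by
          have := dvd_sub h3 h1
          ring_nf at this
          exact this
        have h5 : p ∣ 2 := by exact_mod_cast h4
        have := Nat.le_of_dvd (by omega) h5
        obtain ⟨t, ht⟩ := hodd
        omega
      · exfalso
        have := (hpI.pow_dvd_of_dvd_mul_right 2 h3 hd)
        have := toZ _ this
        push_cast at this
        exact hne (sub_eq_zero.1 this)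
    · have := (hpI.pow_dvd_of_dvd_mul_left 2 h1 hd)
      have := toZ _ this
      push_cast at this
      exact eq_neg_of_add_eq_zero_left this
  · right
    exact ⟨orderOf X, by rw [h.neg_pow, pow_orderOf_eq_one]⟩

lemma aux_main (p : ℕ) (hp : p.Prime) (hodd : Odd p) (ε : ℤ) (hε : ε = 1 ∨ ε = -1)
    (X : ZMod (p ^ 2)) (hX : X ^ (p - 1) = 1) (hY : (X + 1) ^ (p - 1) = 1) :
    ∃ k m : ℕ, 0 < m ∧ 0 < k ∧ ¬ p ∣ m ∧ ((k + m : ℕ) : ZMod (p ^ 2)) ^ (k + m)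
      + (ε : ZMod (p ^ 2)) * (k : ZMod (p ^ 2)) ^ k * (m : ZMod (p ^ 2)) ^ m = 0 := by
  have hev : Even (p - 1) := hodd.tsub_odd odd_one
  rcases hε with rfl | rfl
  · rcases aux_order p hp hodd X hX with ⟨e, he⟩ | ⟨e, he⟩
    · obtain ⟨k, m, h1, h2, h3, h4, h5, h6⟩ := aux_gen p hp X hX hY e 0
      refine ⟨k, m, h1, h2, h3, ?_⟩
      rw [h4, h5, h6, he]; simp
    · obtain ⟨k, m, h1, h2, h3, h4, h5, h6⟩ := aux_gen p hp (-(X + 1))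
        (by rw [hev.neg_pow, hY])
        (by rw [show -(X + 1) + 1 = -X by ring, hev.neg_pow, hX]) 0 e
      refine ⟨k, m, h1, h2, h3, ?_⟩
      rw [h4, h5, h6, show -(X + 1) + 1 = -X by ring, he]; simp
  · obtain ⟨k, m, h1, h2, h3, h4, h5, h6⟩ := aux_gen p hp X hX hY 0 0
    refine ⟨k, m, h1, h2, h3, ?_⟩
    rw [h4, h5, h6]; simp

lemma aux_pth (p : ℕ) (hp : p.Prime) (x : ℤ) (h : IsNonzeroPthPower p x) :
    (x : ZMod (p ^ 2)) ^ (p - 1) = 1 := by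
  obtain ⟨hx, a, ha⟩ := h
  have ha' : (x : ZMod (p ^ 2)) = (a : ZMod (p ^ 2)) ^ p := by
    have := (ZMod.intCast_eq_intCast_iff x (a ^ p) (p ^ 2)).2 (by exact_mod_cast ha)
    rw [this]; push_cast; rfl
  have hpa : ¬ (p : ℤ) ∣ a := fun h => hx <| by
    have h1 : (p : ℤ) ∣ a ^ p := dvd_pow h hp.ne_zero
    have h2 : x ≡ a ^ p [ZMOD p] := ha.of_dvd (dvd_pow_self _ two_ne_zero)
    exact (Int.ModEq.dvd_iff h2).2 h1
  have hu : IsUnit (a : ZMod (p ^ 2)) := by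
    have hc : IsCoprime ((p : ℤ) ^ 2) a :=
      ((Nat.prime_iff_prime_int.1 hp).irreducible.coprime_iff_not_dvd.2 hpa).pow_left
    obtain ⟨u, v, huv⟩ := hc
    have h1 := congrArg (Int.cast : ℤ → ZMod (p ^ 2)) huv
    have hP := ZMod.natCast_self (p ^ 2)
    push_cast at h1 hP
    rw [hP, mul_zero, zero_add] at h1
    exact IsUnit.of_mul_eq_one_right _ h1
  obtain ⟨u, hu⟩ := hu
  have := ZMod.pow_totient u
  rw [Nat.totient_prime_pow hp (by norm_num)] at this
  rw [ha', ← hu, ← pow_mul]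
  simpa using congrArg Units.val this

lemma aux_fermat (p : ℕ) (hp : p.Prime) (a : ℕ) (ha : ¬ p ∣ a) (j : ℕ) :
    ∃ q : ZMod (p ^ 2), (a : ZMod (p ^ 2)) ^ (p - 1) = 1 + (p : ZMod (p ^ 2)) * q := by
  have h := Nat.ModEq.pow_totient ((hp.coprime_iff_not_dvd.2 ha).symm)
  rw [Nat.totient_prime hp] at h
  have h2 := (Nat.modEq_iff_dvd.1 h.symm)
  obtain ⟨q, hq⟩ := h2
  refine ⟨q, ?_⟩
  have := congrArg (Int.cast : ℤ → ZMod (p ^ 2)) hq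
  push_cast at this
  linear_combination this

/-- A prime `p` belongs to `𝒫_ε` if and only if it belongs to `𝒫_cons`.
In particular `𝒫_{+1} = 𝒫_{−1} = 𝒫_cons`. -/
theorem P_eps_eq_P_cons (p : ℕ) (hp : p.Prime) (ε : ℤ) (hε : ε = 1 ∨ ε = -1) :
    (∃ n m : ℕ, 0 < m ∧ m < n ∧ ¬ (p : ℤ) ∣ (m : ℤ) ∧
        ((p : ℤ) ^ 2 ∣ trinomialD ε n m)) ↔
      (∃ x y : ℤ, IsNonzeroPthPower p x ∧ IsNonzeroPthPower p y ∧
        y ≡ x + 1 [ZMOD ((p : ℤ) ^ 2)]) := by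
  have hpI : Prime (p : ℤ) := Nat.prime_iff_prime_int.1 hp
  constructor
  · rintro ⟨n, m, hm, hmn, hpm, hD⟩
    obtain ⟨k, rfl⟩ : ∃ k, n = k + m := ⟨n - m, by omega⟩
    have hk : 0 < k := by omega
    unfold trinomialD at hD
    rw [Nat.add_sub_cancel] at hD
    have hDp : (p : ℤ) ∣ _ := (dvd_pow_self (p : ℤ) two_ne_zero).trans hD
    have hεp : ¬ (p : ℤ) ∣ ε := fun h => by
      apply hpI.not_isUnit
      apply isUnit_of_dvd_unit h
      rcases hε with rfl | rfl <;> simp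
    have hpk : ¬ (p : ℤ) ∣ (k : ℤ) := fun h => by
      have h1 : (p : ℤ) ∣ ε * (k : ℤ) ^ k * (m : ℤ) ^ m :=
        ((h.trans (dvd_pow_self _ hk.ne')).mul_left _).mul_right _
      have h2 := hpI.dvd_of_dvd_pow ((dvd_add_left h1).1 hDp)
      push_cast at h2
      exact hpm ((dvd_add_right h).1 h2)
    have hpn : ¬ (p : ℤ) ∣ ((k + m : ℕ) : ℤ) := fun h => by
      have h1 : (p : ℤ) ∣ ((k + m : ℕ) : ℤ) ^ (k + m) := h.trans (dvd_pow_self _ (by omega))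
      rcases hpI.dvd_or_dvd ((dvd_add_right h1).1 hDp) with h2 | h2
      · rcases hpI.dvd_or_dvd h2 with h3 | h3
        · exact hεp h3
        · exact hpk (hpI.dvd_of_dvd_pow h3)
      · exact hpm (hpI.dvd_of_dvd_pow h2)
    have hodd : Odd p := by
      rcases hp.eq_two_or_odd' with rfl | h
      · exfalso; push_cast at *; omega
      · exact h
    have hev : Even (p - 1) := hodd.tsub_odd odd_one
    have hDR : ((k + m : ℕ) : ZMod (p ^ 2)) ^ (k + m)
      + (ε : ZMod (p ^ 2)) * (k : ZMod (p ^ 2)) ^ k * (m : ZMod (p ^ 2)) ^ m = 0 := by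
      have := (ZMod.intCast_zmod_eq_zero_iff_dvd _ (p ^ 2)).2 (by push_cast; exact hD)
      push_cast at this ⊢
      exact this
    have hε2 : (ε : ZMod (p ^ 2)) ^ (p - 1) = 1 := by
      rcases hε with rfl | rfl
      · simp
      · push_cast; exact hev.neg_one_pow
    obtain ⟨a, ha⟩ := aux_fermat p hp (k + m) (by exact_mod_cast hpn) 0
    obtain ⟨b, hb⟩ := aux_fermat p hp k (by exact_mod_cast hpk) 0
    obtain ⟨c, hc⟩ := aux_fermat p hp m (by exact_mod_cast hpm) 0
    have hP : (p : ZMod (p ^ 2)) ^ 2 = 0 := by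
      have := ZMod.natCast_self (p ^ 2)
      push_cast at this
      exact this
    have h1 := congrArg (· ^ (p - 1)) (eq_neg_of_add_eq_zero_left hDR)
    simp only [hev.neg_pow, mul_pow, hε2, one_mul] at h1
    rw [pow_right_comm, pow_right_comm (k : ZMod (p ^ 2)), pow_right_comm (m : ZMod (p ^ 2)),
      ha, hb, hc, aux_pow _ (by rw [mul_pow, hP, zero_mul]),
      aux_pow _ (by rw [mul_pow, hP, zero_mul]), aux_pow _ (by rw [mul_pow, hP, zero_mul])] at h1
    have hs : ∀ z : ZMod (p ^ 2), z ^ p = z ^ (p - 1) * z := fun z => by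
      rw [← pow_succ, Nat.sub_add_cancel hp.one_le]
    have h2 : ((k + m : ℕ) : ZMod (p ^ 2)) ^ p = (k : ZMod (p ^ 2)) ^ p + (m : ZMod (p ^ 2)) ^ p := by
      rw [hs, hs, hs, ha, hb, hc]
      push_cast at h1 ⊢
      linear_combination h1 + (k * b * m * c : ZMod (p ^ 2)) * hP
    have hu : IsUnit (m : ZMod (p ^ 2)) := by
      rw [ZMod.isUnit_iff_coprime]
      exact ((hp.coprime_iff_not_dvd.2 (by exact_mod_cast hpm)).symm).pow_right 2
    obtain ⟨d, hd⟩ := hu.exists_right_inv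
    obtain ⟨w, rfl⟩ := ZMod.intCast_surjective d
    have hpw : ¬ (p : ℤ) ∣ w := fun h => by
      have h3 : ((m * w - 1 : ℤ) : ZMod (p ^ 2)) = 0 := by push_cast; rw [hd, sub_self]
      have h4 := (ZMod.intCast_zmod_eq_zero_iff_dvd _ (p ^ 2)).1 h3
      push_cast at h4
      have h5 := (dvd_pow_self (p : ℤ) two_ne_zero).trans h4
      have h6 := (dvd_sub_right (h.mul_left _)).1 h5
      exact hpI.not_isUnit (isUnit_of_dvd_one h6)
    have hnz : ∀ z : ℤ, ¬ (p : ℤ) ∣ z → IsNonzeroPthPower p ((z * w) ^ p) := fun z hz =>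
      ⟨fun h => (hpI.dvd_or_dvd (hpI.dvd_of_dvd_pow h)).elim hz hpw, z * w, Int.ModEq.refl _⟩
    refine ⟨_, _, hnz _ hpk, hnz _ hpn, ?_⟩
    have h7 : ((((((k + m : ℕ) : ℤ) * w) ^ p : ℤ)) : ZMod (p ^ 2))
        = (((((k : ℤ) * w) ^ p + 1 : ℤ)) : ZMod (p ^ 2)) := by
      have hd' : (m : ZMod (p ^ 2)) ^ p * (w : ZMod (p ^ 2)) ^ p = 1 := by
        rw [← mul_pow, hd, one_pow]
      push_cast at h2 ⊢
      rw [mul_pow, mul_pow, h2]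
      linear_combination hd'
    have := (ZMod.intCast_eq_intCast_iff _ _ _).1 h7
    exact_mod_cast this
  · rintro ⟨x, y, hx, hy, hxy⟩
    have hodd : Odd p := by
      rcases hp.eq_two_or_odd' with rfl | h
      · exfalso
        have h1 := hx.1
        have h2 := hy.1
        obtain ⟨t, ht⟩ := hxy.dvd
        push_cast at *; omega
      · exact h
    have hX := aux_pth p hp x hx
    have hY := aux_pth p hp y hy
    have hXY : (y : ZMod (p ^ 2)) = x + 1 := by
      have := (ZMod.intCast_eq_intCast_iff y (x + 1) (p ^ 2)).2 (by exact_mod_cast hxy)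
      rw [this]; push_cast; rfl
    rw [hXY] at hY
    obtain ⟨k, m, h1, h2, h3, h4⟩ := aux_main p hp hodd ε hε x hX hY
    refine ⟨k + m, m, h1, by omega, by exact_mod_cast h3, ?_⟩
    unfold trinomialD
    rw [Nat.add_sub_cancel]
    have := (ZMod.intCast_zmod_eq_zero_iff_dvd (((k + m : ℕ) : ℤ) ^ (k + m)
      + ε * (k : ℤ) ^ k * (m : ℤ) ^ m) (p ^ 2)).1 (by push_cast at h4 ⊢; exact h4)
    exact_mod_cast this
end

section
/- If n is a positive integer with n ≡ 2 (mod 6), then ((n² − n + 1)/3)² divides n^n − (n−1)^(n−1). -/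
theorem sdn_aux (Q x : ℤ) (k : ℕ) : ∃ c, (1 + Q * x) ^ k = 1 + k * Q * x + Q ^ 2 * c := by
  induction k with
  | zero => exact ⟨0, by simp⟩
  | succ k ih =>
    obtain ⟨c, hc⟩ := ih
    refine ⟨k * x ^ 2 + c * (1 + Q * x), ?_⟩
    rw [pow_succ, hc]
    push_cast
    ring

/-- If `n` is a positive integer with `n ≡ 2 (mod 6)`, then `((n² − n + 1)/3)²`
divides `n^n − (n−1)^(n−1)`.  (When `n ≡ 2 (mod 6)`, `3 ∣ n² − n + 1`, so the
integer division is exact.) -/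
theorem strange_divisibility_n (n : ℕ) (hn : 0 < n) (h6 : n % 6 = 2) :
    ((((n : ℤ) ^ 2 - n + 1) / 3) ^ 2) ∣ (n : ℤ) ^ n - ((n : ℤ) - 1) ^ (n - 1) := by
  obtain ⟨k, rfl⟩ : ∃ k, n = 6 * k + 2 := ⟨n / 6, by omega⟩
  have hQ : (((6 * k + 2 : ℕ) : ℤ) ^ 2 - (6 * k + 2 : ℕ) + 1) / 3 = 12 * (k : ℤ) ^ 2 + 6 * k + 1 := by
    apply Int.ediv_eq_of_eq_mul_right (by norm_num)
    push_cast
    ring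
  rw [hQ]
  have h1 : ((6 * k + 2 : ℕ) : ℤ) - 1 = 6 * k + 1 := by push_cast; ring
  have h2 : 6 * k + 2 - 1 = 6 * k + 1 := by omega
  rw [h1, h2]
  push_cast
  obtain ⟨a, ha⟩ := sdn_aux (12 * (k : ℤ) ^ 2 + 6 * k + 1)
    (3 * ((6 * k + 2) ^ 3 - 1) * (6 * k + 2 + 1)) k
  obtain ⟨b, hb⟩ := sdn_aux (12 * (k : ℤ) ^ 2 + 6 * k + 1)
    (3 * (6 * k + 1 - 1) * ((6 * k + 1) ^ 3 + 1)) k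
  have e1 : (6 * (k : ℤ) + 2) ^ 6 = 1 + (12 * (k : ℤ) ^ 2 + 6 * k + 1) *
    (3 * ((6 * k + 2) ^ 3 - 1) * (6 * k + 2 + 1)) := by ring
  have e2 : (6 * (k : ℤ) + 1) ^ 6 = 1 + (12 * (k : ℤ) ^ 2 + 6 * k + 1) *
    (3 * (6 * k + 1 - 1) * ((6 * k + 1) ^ 3 + 1)) := by ring
  rw [pow_add _ (6 * k) 2, pow_add _ (6 * k) 1, pow_mul _ 6 k, pow_mul _ 6 k, e1, e2, ha, hb]
  refine ⟨(11664)*(k:ℤ)^5 + (17496)*(k:ℤ)^4 + (11664)*(k:ℤ)^3 + (3132)*(k:ℤ)^2 + (234)*(k:ℤ)^1 + (3)*(k:ℤ)^0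
    + a * (6 * k + 2) ^ 2 - b * (6 * k + 1), ?_⟩
  ring
end

section
/- For every nonnegative integer k, the integer (12k² + 6k + 1)² divides (6k+2)^(6k+2) − (6k+1)^(6k+1). -/
theorem aux_expand (a b : ℤ) (m : ℕ) :
    ∃ c : ℤ, (a + b) ^ (m + 1) = a ^ (m + 1) + (m + 1) * a ^ m * b + b ^ 2 * c := by
  induction m with
  | zero => exact ⟨0, by simp⟩
  | succ m ih =>
    obtain ⟨c, hc⟩ := ih
    refine ⟨(m + 1) * a ^ m + (a + b) * c, ?_⟩
    rw [pow_succ, hc]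
    push_cast
    ring

theorem aux_one (b : ℤ) (m : ℕ) : ∃ c : ℤ, (1 + b) ^ m = 1 + m * b + b ^ 2 * c := by
  cases m with
  | zero => exact ⟨0, by simp⟩
  | succ m =>
    obtain ⟨c, hc⟩ := aux_expand 1 b m
    exact ⟨c, by rw [hc]; push_cast; simp⟩

/-- For every nonnegative integer `k`, the integer `(12k² + 6k + 1)²` divides
`(6k+2)^(6k+2) − (6k+1)^(6k+1)`. -/
theorem strange_divisibility_k (k : ℕ) :
    ((12 * (k : ℤ) ^ 2 + 6 * k + 1) ^ 2) ∣
      (6 * (k : ℤ) + 2) ^ (6 * k + 2) - (6 * (k : ℤ) + 1) ^ (6 * k + 1) := by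
  obtain ⟨M, hM⟩ : ∃ M : ℤ, M = 12 * (k : ℤ) ^ 2 + 6 * k + 1 := ⟨_, rfl⟩
  obtain ⟨n, hn⟩ : ∃ n : ℤ, n = 6 * (k : ℤ) + 1 := ⟨_, rfl⟩
  obtain ⟨t, ht⟩ : ∃ t : ℤ, t = n ^ (6 * k) := ⟨_, rfl⟩
  obtain ⟨d, hd⟩ := aux_one (18 * k * M) (2 * k)
  obtain ⟨c, hc⟩ := aux_expand (-n ^ 2) (3 * M) (6 * k + 1)
  have h3 : n ^ 3 = 1 + 18 * k * M := by rw [hn, hM]; ring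
  have ht' : t = 1 + 36 * k ^ 2 * M + M ^ 2 * (324 * k ^ 2 * d) := by
    rw [ht, show 6 * k = 3 * (2 * k) by ring, pow_mul, h3, hd]; push_cast; ring
  have e1 : (-n ^ 2) ^ (6 * k + 1 + 1) = t ^ 2 * n ^ 4 := by
    rw [Even.neg_pow ⟨3 * k + 1, by ring⟩, ht]; ring
  have e2 : (-n ^ 2) ^ (6 * k + 1) = - (t ^ 2 * n ^ 2) := by
    rw [Odd.neg_pow ⟨3 * k, by ring⟩, ht]; ring
  have e3 : 6 * (k : ℤ) + 2 = -n ^ 2 + 3 * M := by rw [hn, hM]; ring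
  have e4 : n ^ (6 * k + 1) = t * n := by rw [pow_succ, ht]
  rw [← hM, ← hn, e4, e3, hc, e1, e2]
  push_cast
  obtain ⟨D, hD⟩ : ∃ D : ℤ, D = 324 * k ^ 2 * d := ⟨_, rfl⟩
  rw [← hD] at ht'
  obtain ⟨g, hg⟩ : ∃ g : ℤ, g = 18 * k - (18 * k + 6) * n := ⟨_, rfl⟩
  have hgk : 36 * (k : ℤ) ^ 2 + g = -6 * M := by rw [hg, hn, hM]; ring
  have inner : t * (1 + g * M) - 1 = M ^ 2 * (-6 + D * (1 + g * M) + 36 * k ^ 2 * g) := by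
    rw [ht']; linear_combination M * hgk
  refine ⟨t * n * (-6 + D * (1 + g * M) + 36 * k ^ 2 * g) + 9 * c, ?_⟩
  linear_combination t * n * inner + t ^ 2 * n * h3 - t ^ 2 * n * M * hg
end

section
/- Let p be a prime, let ε ∈ {−1,1}, and let m and n be positive integers not divisible by p. If m′ and n′ are positive integers with m′ ≡ m (mod p(p−1)) and n′ ≡ n (mod p(p−1)), m′ < n′ and m < n, then p² divides D_ε(n,m) if and only if p² divides D_ε(n′,m′). -/
theorem aux_euler (p : ℕ) (hp : p.Prime) (a b c : ℕ) (hc : ¬ p ∣ c)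
    (h : b ≡ a [MOD p * (p - 1)]) : (c : ℤ) ^ b ≡ (c : ℤ) ^ a [ZMOD (p : ℤ) ^ 2] := by
  have hco : Nat.Coprime c (p ^ 2) :=
    Nat.Coprime.pow_right 2 ((hp.coprime_iff_not_dvd.2 hc).symm)
  have ht : Nat.totient (p ^ 2) = p * (p - 1) := by
    rw [Nat.totient_prime_pow hp (by norm_num)]; simp
  have h1 : c ^ (p * (p - 1)) ≡ 1 [MOD p ^ 2] := by
    rw [← ht]; exact Nat.ModEq.pow_totient hco
  have key : ∀ x : ℕ, c ^ x ≡ c ^ (x % (p * (p - 1))) [MOD p ^ 2] := by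
    intro x
    conv_lhs => rw [← Nat.mod_add_div x (p * (p - 1)), pow_add, pow_mul]
    simpa using (Nat.ModEq.refl (c ^ (x % (p * (p - 1))))).mul (h1.pow (x / (p * (p - 1))))
  have h2 : c ^ b ≡ c ^ a [MOD p ^ 2] := by
    refine (key b).trans ?_
    rw [show b % (p * (p - 1)) = a % (p * (p - 1)) from h]
    exact (key a).symm
  have := (Int.natCast_modEq_iff).2 h2
  exact_mod_cast this

theorem aux_self (p : ℕ) (hp : p.Prime) (a b : ℕ) (ha0 : 0 < a) (ha : ¬ p ∣ a)
    (k : ℤ) (h : (b : ℤ) = a + k * (p * (p - 1))) :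
    (b : ℤ) ^ b ≡ (a : ℤ) ^ a * (1 + k * (p * (p - 1))) [ZMOD (p : ℤ) ^ 2] := by
  have hmod : b ≡ a [MOD p * (p - 1)] := by
    rw [← Int.natCast_modEq_iff, Int.modEq_iff_dvd]
    push_cast [hp.one_le]
    exact ⟨-k, by rw [h]; ring⟩
  have hb : ¬ p ∣ b := by
    intro hd
    apply ha
    have hd' : (p : ℤ) ∣ b := by exact_mod_cast hd
    have : (p : ℤ) ∣ a := by
      have e : (a : ℤ) = b - p * (k * (p - 1)) := by rw [h]; ring
      rw [e]
      exact dvd_sub hd' (dvd_mul_right _ _)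
    exact_mod_cast this
  refine (aux_euler p hp a b b hb hmod).trans ?_
  obtain ⟨c, hc⟩ := Polynomial.powAddExpansion (a : ℤ) (k * (p * (p - 1))) a
  rw [h, hc, Int.modEq_iff_dvd]
  have e : (a : ℤ) ^ a = a * (a : ℤ) ^ (a - 1) := (mul_pow_sub_one ha0.ne' _).symm
  refine ⟨-(c * (k * (p - 1)) ^ 2), ?_⟩
  linear_combination (k * (p * (p - 1))) * e

theorem aux_dvd (p : ℕ) (hp : p.Prime) (ε : ℤ) (n m : ℕ) (hpn : ¬ p ∣ n) (hlt : m < n)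
    (hd : p ∣ n - m) : ¬ (p : ℤ) ^ 2 ∣ trinomialD ε n m := by
  intro h
  have h1 : (p : ℤ) ∣ trinomialD ε n m := (dvd_pow_self _ two_ne_zero).trans h
  have h2 : (p : ℤ) ∣ ((n - m : ℕ) : ℤ) ^ (n - m) :=
    (Int.natCast_dvd_natCast.2 hd).trans (dvd_pow_self _ (by omega))
  unfold trinomialD at h1
  have h3 := (dvd_add_left ((h2.mul_left ε).mul_right _)).1 h1
  have h4 := (Nat.prime_iff_prime_int.1 hp).dvd_of_dvd_pow h3
  exact hpn (by exact_mod_cast h4)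

/-- Whether `p² ∣ D_ε(n,m)` (for `p ∤ mn`) depends only on the residue classes of
`n` and `m` modulo `p(p−1)`. -/
theorem residue_classes_mod_p_pminus1 (p : ℕ) (hp : p.Prime) (ε : ℤ) (hε : ε = 1 ∨ ε = -1)
    (m n m' n' : ℕ) (hm : 0 < m) (hn : 0 < n) (hm' : 0 < m') (hn' : 0 < n')
    (hpm : ¬ (p : ℤ) ∣ (m : ℤ)) (hpn : ¬ (p : ℤ) ∣ (n : ℤ))
    (hmm' : m' ≡ m [MOD p * (p - 1)]) (hnn' : n' ≡ n [MOD p * (p - 1)])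
    (hlt : m < n) (hlt' : m' < n') :
    (p : ℤ) ^ 2 ∣ trinomialD ε n m ↔ (p : ℤ) ^ 2 ∣ trinomialD ε n' m' := by
  have hpm' : ¬ p ∣ m := by exact_mod_cast hpm
  have hpn' : ¬ p ∣ n := by exact_mod_cast hpn
  obtain ⟨k, hk⟩ := (Int.natCast_modEq_iff.2 hnn').symm.dvd
  obtain ⟨l, hl⟩ := (Int.natCast_modEq_iff.2 hmm').symm.dvd
  push_cast [hp.one_le] at hk hl
  have hk' : (n' : ℤ) = n + k * (p * (p - 1)) := by linear_combination hk
  have hl' : (m' : ℤ) = m + l * (p * (p - 1)) := by linear_combination hl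
  have hd' : ((n' - m' : ℕ) : ℤ) = (n - m : ℕ) + (k - l) * (p * (p - 1)) := by
    rw [Nat.cast_sub hlt.le, Nat.cast_sub hlt'.le]
    linear_combination hk - hl
  have hpn2 : ¬ p ∣ n' := by
    intro hd
    apply hpn
    have e : (n : ℤ) = n' - p * (k * (p - 1)) := by rw [hk']; ring
    rw [e]
    exact dvd_sub (by exact_mod_cast hd) (dvd_mul_right _ _)
  by_cases hpd : p ∣ n - m
  · have hpd' : p ∣ n' - m' := by
      have : (p : ℤ) ∣ ((n' - m' : ℕ) : ℤ) := by
        rw [hd']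
        exact dvd_add (Int.natCast_dvd_natCast.2 hpd) ⟨(k - l) * (p - 1), by ring⟩
      exact_mod_cast this
    exact iff_of_false (aux_dvd p hp ε n m hpn' hlt hpd) (aux_dvd p hp ε n' m' hpn2 hlt' hpd')
  · have A := aux_self p hp n n' hn hpn' k hk'
    have B := aux_self p hp m m' hm hpm' l hl'
    have C := aux_self p hp (n - m) (n' - m') (by omega) hpd (k - l) hd'
    have E : trinomialD ε n' m' ≡ trinomialD ε n m * (1 + k * (p * (p - 1))) [ZMOD (p : ℤ) ^ 2] := by
      unfold trinomialD
      refine (A.add (((Int.ModEq.refl ε).mul C).mul B)).trans ?_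
      rw [Int.modEq_iff_dvd]
      exact ⟨-(ε * ((n - m : ℕ) : ℤ) ^ (n - m) * (m : ℤ) ^ m * ((k - l) * l * (p - 1) ^ 2)), by ring⟩
    have hco : IsCoprime ((p : ℤ) ^ 2) (1 + k * (p * (p - 1))) := by
      apply IsCoprime.pow_left
      exact ⟨-(k * (p - 1)), 1, by ring⟩
    rw [E.dvd_iff]
    exact ⟨fun h => h.mul_right _, fun h => hco.dvd_of_dvd_mul_right h⟩
end

section
/- Let p be a prime, let m, n, and ℓ be integers with 0 < m < n, and let r be a positive integer with r ≡ n (mod p) and r > m. Then p² divides r^n + ℓ·(r−m)^(n−m) if and only if p² divides n^n + ℓ·(n−m)^(n−m). -/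
theorem pow_self_aux (e : ℕ) (he : 0 < e) (y : ℤ) :
    ∃ c : ℤ, ((e : ℤ) + y) ^ e = (e : ℤ) ^ e * (1 + y) + c * y ^ 2 := by
  obtain ⟨c, hc⟩ := Polynomial.powAddExpansion (e : ℤ) y e
  refine ⟨c, ?_⟩
  have h : (e : ℤ) * (e : ℤ) ^ (e - 1) = (e : ℤ) ^ e := mul_pow_sub_one he.ne' _
  rw [hc, h]
  ring

/-- Let `p` be a prime, let `m < n` be positive integers, `ℓ` an integer, and let
`r` be a positive integer with `r ≡ n (mod p)` and `r > m`.  Then `p²` divides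
`r^n + ℓ·(r−m)^(n−m)` if and only if `p²` divides `n^n + ℓ·(n−m)^(n−m)`. -/
theorem off_by_p (p : ℕ) (hp : p.Prime) (m n : ℕ) (ℓ : ℤ)
    (hm : 0 < m) (hmn : m < n) (r : ℕ) (hr : 0 < r)
    (hrn : (r : ℤ) ≡ (n : ℤ) [ZMOD (p : ℤ)]) (hrm : m < r) :
    ((p : ℤ) ^ 2 ∣ (r : ℤ) ^ n + ℓ * ((r : ℤ) - (m : ℤ)) ^ (n - m)) ↔
      ((p : ℤ) ^ 2 ∣ (n : ℤ) ^ n + ℓ * ((n : ℤ) - (m : ℤ)) ^ (n - m)) := by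
  obtain ⟨k, hk⟩ := hrn.symm.dvd
  obtain ⟨e, rfl⟩ := Nat.exists_eq_add_of_lt hmn
  have h1 : m + e + 1 - m = e + 1 := by omega
  rw [h1]
  obtain ⟨c, hc⟩ := pow_self_aux (m + e + 1) (by omega) (p * k)
  obtain ⟨d, hd⟩ := pow_self_aux (e + 1) (by omega) (p * k)
  have e1 : (r : ℤ) = ((m + e + 1 : ℕ) : ℤ) + p * k := by linarith
  have e2 : (r : ℤ) - m = ((e + 1 : ℕ) : ℤ) + p * k := by
    rw [e1]; push_cast; ring
  have e3 : ((m + e + 1 : ℕ) : ℤ) - m = ((e + 1 : ℕ) : ℤ) := by push_cast; ring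
  rw [e2, e3, e1, hc, hd]
  generalize ((m + e + 1 : ℕ) : ℤ) ^ (m + e + 1) = A
  generalize ((e + 1 : ℕ) : ℤ) ^ (e + 1) = B
  have e4 : A * (1 + p * k) + c * (p * k) ^ 2 + ℓ * (B * (1 + p * k) + d * (p * k) ^ 2)
      = (A + ℓ * B) * (1 + p * k) + (p : ℤ) ^ 2 * (k ^ 2 * (c + ℓ * d)) := by ring
  rw [e4, dvd_add_left (dvd_mul_right _ _)]
  have hcop : IsCoprime ((p : ℤ) ^ 2) (1 + p * k) := ⟨k ^ 2, 1 - p * k, by ring⟩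
  exact ⟨fun h => hcop.dvd_of_dvd_mul_right h, fun h => h.mul_right _⟩
end

section
/- Let p be a prime, let ε ∈ {−1,1}, and let m and n be positive integers with m < n, p ∤ m, p ∤ n, and p² ∣ D_ε(n,m). Let k be any integer with k ≡ m − n (mod p(p−1)), and let x be any integer with x ≡ 1 − m·n⁻¹ (mod p), where n⁻¹ denotes an inverse of n modulo p². Then x^k ≡ −ε·(1−x)^m (mod p²) (where, if k is negative, x^k denotes x^(k + t·p(p−1)) for t large enough to make the exponent positive; this is well defined since x is invertible modulo p²). -/
theorem aux_pow_s5 (a : ℕ) (ha : 0 < a) (q : ℤ) :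
    ∃ c : ℤ, ((a : ℤ) + q) ^ a = (a : ℤ) ^ a * (1 + q) + c * q ^ 2 := by
  obtain ⟨c, hc⟩ := Polynomial.powAddExpansion (a : ℤ) q a
  refine ⟨c, ?_⟩
  rw [hc]
  obtain ⟨b, rfl⟩ : ∃ b, a = b + 1 := ⟨a - 1, by omega⟩
  simp only [Nat.add_sub_cancel]
  ring

/-- Suppose `p² ∣ D_ε(n,m)` with `p ∤ m`, `p ∤ n`.  If `k ≡ m − n (mod p(p−1))`
(`k` a nonnegative representative) and `x ≡ 1 − m·n⁻¹ (mod p)`, where `n⁻¹` is an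
inverse of `n` modulo `p²`, then `x^k ≡ −ε·(1−x)^m (mod p²)`. -/
theorem any_x_works (p : ℕ) (hp : p.Prime) (ε : ℤ) (hε : ε = 1 ∨ ε = -1)
    (m n : ℕ) (hm : 0 < m) (hmn : m < n)
    (hpm : ¬ (p : ℤ) ∣ (m : ℤ)) (hpn : ¬ (p : ℤ) ∣ (n : ℤ))
    (hD : (p : ℤ) ^ 2 ∣ trinomialD ε n m)
    (k : ℕ) (hk : (k : ℤ) ≡ (m : ℤ) - (n : ℤ) [ZMOD ((p : ℤ) * ((p : ℤ) - 1))])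
    (ninv : ℤ) (hninv : (n : ℤ) * ninv ≡ 1 [ZMOD ((p : ℤ) ^ 2)])
    (x : ℤ) (hx : x ≡ 1 - (m : ℤ) * ninv [ZMOD (p : ℤ)]) :
    x ^ k ≡ -ε * (1 - x) ^ m [ZMOD ((p : ℤ) ^ 2)] := by
  have hpp : Prime (p : ℤ) := Nat.prime_iff_prime_int.mp hp
  unfold trinomialD at hD
  obtain ⟨a, rfl⟩ : ∃ a, n = a + m := ⟨n - m, by omega⟩
  have ha : 0 < a := by omega
  rw [Nat.add_sub_cancel] at hD
  have hpa : ¬ (p : ℤ) ∣ (a : ℤ) := by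
    intro h
    apply hpn
    apply hpp.dvd_of_dvd_pow (n := a + m)
    have h1 : (p : ℤ) ∣ _ := (Dvd.intro_left _ (by rw [sq] : (p:ℤ) * p = (p:ℤ)^2)).trans hD
    refine (dvd_add_left ?_).mp h1
    exact Dvd.dvd.mul_right (Dvd.dvd.mul_left (dvd_pow h ha.ne') _) _
  have hs : (p : ℤ) ∣ ((a + m : ℕ) : ℤ) * x - a := by
    obtain ⟨u, hu⟩ := hninv.dvd
    obtain ⟨v, hv⟩ := hx.dvd
    refine ⟨m * (p * u) - (a + m) * v, ?_⟩
    push_cast at hu ⊢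
    linear_combination (m : ℤ) * hu - ((a : ℤ) + m) * hv
  obtain ⟨s, hs⟩ := hs
  have hpx : ¬ (p : ℤ) ∣ x := by
    intro h
    apply hpa
    have : (a : ℤ) = ((a + m : ℕ) : ℤ) * x - p * s := by linarith
    rw [this]
    exact dvd_sub (h.mul_left _) (dvd_mul_right _ _)
  have cop : ∀ y : ℤ, ¬ (p : ℤ) ∣ y → IsCoprime ((p : ℤ) ^ 2) y := fun y hy =>
    IsCoprime.pow_left ((Prime.coprime_iff_not_dvd hpp).mpr hy)
  have h1 : x ^ (k + a) ≡ 1 [ZMOD ((p : ℤ) ^ 2)] := by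
    have hd : p * (p - 1) ∣ k + a := by
      have := hk.symm.dvd
      zify [hp.one_le]
      convert this using 1
      push_cast; ring
    obtain ⟨t, ht⟩ := hd
    have hu : IsUnit ((x : ℤ) : ZMod (p ^ 2)) := by
      obtain ⟨u, v, h⟩ := cop x hpx
      refine IsUnit.of_mul_eq_one (v : ZMod (p ^ 2)) ?_
      have h' := congrArg (Int.cast : ℤ → ZMod (p ^ 2)) h
      have h0 : (p : ZMod (p ^ 2)) ^ 2 = 0 := by
        exact_mod_cast ZMod.natCast_self (p ^ 2)
      push_cast at h'
      rw [h0] at h'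
      linear_combination h'
    obtain ⟨w, hw⟩ := hu
    have hwt := ZMod.pow_totient w
    rw [Nat.totient_prime_pow hp (by norm_num)] at hwt
    have : ((p : ℤ) ^ 2) = ((p ^ 2 : ℕ) : ℤ) := by push_cast; rfl
    rw [this, ← ZMod.intCast_eq_intCast_iff]
    push_cast
    rw [← hw, ht, pow_mul, ← Units.val_pow_eq_pow_val, ← Units.val_pow_eq_pow_val]
    simp only [Nat.add_one_sub_one, pow_one] at hwt
    rw [hwt]; simp
  obtain ⟨c, hc⟩ := aux_pow_s5 a ha (p * s)
  obtain ⟨d, hd⟩ := aux_pow_s5 m hm (-(p * s))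
  have e1 : ((a + m : ℕ) : ℤ) * x = a + p * s := by linarith
  have e2 : ((a + m : ℕ) : ℤ) * (1 - x) = m + -(p * s) := by push_cast at e1 ⊢; linarith
  rw [← e1, mul_pow] at hc
  rw [← e2, mul_pow] at hd
  set N : ℤ := ((a + m : ℕ) : ℤ) with hN
  have key : (p : ℤ) ^ 2 ∣ N ^ (a + m) * (1 + ε * (x ^ a * (1 - x) ^ m)) := by
    have e : N ^ (a + m) * (1 + ε * (x ^ a * (1 - x) ^ m))
      = N ^ (a + m) + ε * ((N ^ a * x ^ a) * (N ^ m * (1 - x) ^ m)) := by ring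
    rw [e, hc, hd]
    obtain ⟨f, hf⟩ := hD
    refine ⟨f + ε * (-(a : ℤ) ^ a * m ^ m * s ^ 2 + (a : ℤ) ^ a * (1 + p * s) * d * s ^ 2
      + c * s ^ 2 * (m ^ m * (1 - p * s) + d * (p * s) ^ 2)), ?_⟩
    linear_combination hf
  have key2 := (cop _ (fun h => hpn (hpp.dvd_of_dvd_pow h))).dvd_of_dvd_mul_left key
  have h2 := h1.symm.dvd
  refine (Int.modEq_iff_dvd.mpr ?_).symm
  refine (cop (x ^ a) (fun h => hpx (hpp.dvd_of_dvd_pow h))).dvd_of_dvd_mul_left ?_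
  have := (dvd_add key2 (h1.symm.dvd))
  convert this using 1
  ring
end

section
/- Let p be an odd prime, let ε ∈ {−1,1}, and let m and n be positive integers with m < n, p ∤ m, p ∤ n, and p² ∣ D_ε(n,m). Let x be the unique p-th power modulo p² satisfying x ≡ 1 − m·n⁻¹ (mod p), and let k be a positive integer with k ≡ m − n (mod p−1). Then x^k ≡ −ε·(1−x)^m (mod p²); in particular x − 1 is also a p-th power modulo p², so x − 1 and x are consecutive nonzero p-th powers modulo p². -/
lemma aux_self_s6 (P y : ℤ) (h : P ∣ y) (a : ℕ) (ha : 0 < a) :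
    ((a : ℤ) + y) ^ a ≡ (a : ℤ) ^ a * (1 + y) [ZMOD P ^ 2] := by
  obtain ⟨s, rfl⟩ := h
  obtain ⟨c, hc⟩ := Polynomial.powAddExpansion (a : ℤ) (P * s) a
  rw [hc]
  obtain ⟨b, rfl⟩ : ∃ b, a = b + 1 := ⟨a - 1, by omega⟩
  refine (Int.modEq_iff_dvd.mpr ⟨-(c * s ^ 2), ?_⟩)
  simp only [Nat.add_sub_cancel]
  ring

lemma aux_one_s6 (P u : ℤ) (hP : Prime P) (m : ℕ) (hm : ¬ P ∣ (m : ℤ))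
    (h1 : u ≡ 1 [ZMOD P]) (h2 : u ^ m ≡ 1 [ZMOD P ^ 2]) : u ≡ 1 [ZMOD P ^ 2] := by
  obtain ⟨v, hv⟩ := h1.symm.dvd
  obtain ⟨w, hw⟩ := h2.symm.dvd
  obtain ⟨c, hc⟩ := Polynomial.powAddExpansion (1 : ℤ) (P * v) m
  have hu : u = 1 + P * v := by linarith
  rw [hu, hc] at hw
  simp only [one_pow, mul_one] at hw
  have h3 : (m : ℤ) * v = P * (w - c * v ^ 2) := by
    apply mul_left_cancel₀ hP.ne_zero
    linear_combination hw
  rcases hP.dvd_or_dvd (Dvd.intro _ h3.symm) with h | ⟨t, rfl⟩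
  · exact absurd h hm
  · rw [hu]
    exact Int.modEq_iff_dvd.mpr ⟨-t, by ring⟩

lemma aux_cancel {P a b c d : ℤ} (h : a * d ≡ 1 [ZMOD P]) (h2 : a * b ≡ a * c [ZMOD P]) :
    b ≡ c [ZMOD P] := by
  have e1 : d * (a * b) ≡ b [ZMOD P] := by
    have := h.mul_right b
    rw [one_mul] at this
    rwa [show d * (a * b) = a * d * b by ring]
  have e2 : d * (a * c) ≡ c [ZMOD P] := by
    have := h.mul_right c
    rw [one_mul] at this
    rwa [show d * (a * c) = a * d * c by ring]
  exact e1.symm.trans ((h2.mul_left d).trans e2)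

/-- Let `p` be an odd prime and suppose `p² ∣ D_ε(n,m)` with `p ∤ m`, `p ∤ n`.
Let `x` be the unique `p`-th power modulo `p²` (equivalently, `x^(p−1) ≡ 1 (mod p²)`)
with `x ≡ 1 − m·n⁻¹ (mod p)`, and let `k > 0` satisfy `k ≡ m − n (mod p−1)`.
Then `x^k ≡ −ε·(1−x)^m (mod p²)`; in particular `x − 1` is also a nonzero `p`-th power
modulo `p²`, so `x − 1` and `x` are consecutive nonzero `p`-th powers modulo `p²`. -/
theorem now_theyre_consecutive (p : ℕ) (hp : p.Prime) (hodd : Odd p)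
    (ε : ℤ) (hε : ε = 1 ∨ ε = -1)
    (m n : ℕ) (hm : 0 < m) (hmn : m < n)
    (hpm : ¬ (p : ℤ) ∣ (m : ℤ)) (hpn : ¬ (p : ℤ) ∣ (n : ℤ))
    (hD : (p : ℤ) ^ 2 ∣ trinomialD ε n m)
    (ninv : ℤ) (hninv : (n : ℤ) * ninv ≡ 1 [ZMOD ((p : ℤ) ^ 2)])
    (x : ℤ) (hxpow : x ^ (p - 1) ≡ 1 [ZMOD ((p : ℤ) ^ 2)])
    (hx : x ≡ 1 - (m : ℤ) * ninv [ZMOD (p : ℤ)])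
    (k : ℕ) (hk0 : 0 < k) (hk : (k : ℤ) ≡ (m : ℤ) - (n : ℤ) [ZMOD ((p : ℤ) - 1)]) :
    x ^ k ≡ -ε * (1 - x) ^ m [ZMOD ((p : ℤ) ^ 2)] ∧
      (¬ (p : ℤ) ∣ (x - 1) ∧ ∃ a : ℤ, x - 1 ≡ a ^ p [ZMOD ((p : ℤ) ^ 2)]) := by
  have hP : Prime (p : ℤ) := Nat.prime_iff_prime_int.mp hp
  have hp1 : 1 ≤ p := hp.one_lt.le
  have hp3 : 2 ≤ p - 1 := by
    have := hp.two_le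
    obtain ⟨r, hr⟩ := hodd
    omega
  have hεε : ε * ε = 1 := by rcases hε with rfl | rfl <;> norm_num
  obtain ⟨l, rfl⟩ : ∃ l, n = m + l := ⟨n - m, by omega⟩
  have hl : 0 < l := by omega
  have hpp : (p : ℤ) ∣ (p : ℤ) ^ 2 := dvd_pow_self _ two_ne_zero
  unfold trinomialD at hD
  rw [Nat.add_sub_cancel_left] at hD
  -- n x = l + y
  have hnx : (p : ℤ) ∣ ((m + l : ℕ) : ℤ) * x - l := by
    obtain ⟨s, hs⟩ := hx.symm.dvd
    obtain ⟨t, ht⟩ := (hninv.symm.of_dvd hpp).dvd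
    refine ⟨((m + l : ℕ) : ℤ) * s - m * t, ?_⟩
    push_cast at *
    linear_combination ((m : ℤ) + l) * hs - (m : ℤ) * ht
  set y : ℤ := ((m + l : ℕ) : ℤ) * x - l with hy
  have ea := aux_self_s6 p y hnx l hl
  have eb := aux_self_s6 p (-y) (hnx.neg_right) m hm
  rw [show (l : ℤ) + y = ((m + l : ℕ) : ℤ) * x by rw [hy]; ring] at ea
  rw [show (m : ℤ) + -y = ((m + l : ℕ) : ℤ) * (1 - x) by rw [hy]; push_cast; ring] at eb
  have hy2 : (p : ℤ) ^ 2 ∣ y ^ 2 := pow_dvd_pow_of_dvd hnx 2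
  have eab := ea.mul eb
  have key0 : ((m + l : ℕ) : ℤ) ^ (m + l) * (x ^ l * (1 - x) ^ m)
      ≡ ((m + l : ℕ) : ℤ) ^ (m + l) * (-ε) [ZMOD (p : ℤ) ^ 2] := by
    obtain ⟨c, hc⟩ := eab.dvd
    obtain ⟨d, hd⟩ := hD
    obtain ⟨e, he⟩ := hy2
    refine Int.modEq_iff_dvd.mpr ⟨c + (l : ℤ) ^ l * (m : ℤ) ^ m * e - ε * d, ?_⟩
    rw [mul_pow, mul_pow] at hc
    rw [pow_add] at hd ⊢
    linear_combination hc + (l : ℤ) ^ l * (m : ℤ) ^ m * he - ε * hd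
      + (l : ℤ) ^ l * (m : ℤ) ^ m * hεε
  have key : x ^ l * (1 - x) ^ m ≡ -ε [ZMOD (p : ℤ) ^ 2] := by
    have hn := hninv.pow (m + l)
    rw [mul_pow, one_pow] at hn
    exact aux_cancel hn key0
  have hxkl : x ^ (k + l) ≡ 1 [ZMOD (p : ℤ) ^ 2] := by
    have hd : p - 1 ∣ k + l := by
      have := hk.symm.dvd
      zify [hp1]
      push_cast at this
      rwa [show (k : ℤ) - (m - (m + l)) = k + l by ring] at this
    obtain ⟨q, hq⟩ := hd
    have := hxpow.pow q
    rw [one_pow, ← pow_mul] at this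
    rwa [hq]
  have h1x : ¬ (p : ℤ) ∣ 1 - x := by
    intro h
    have h0 : (p : ℤ) ∣ x ^ l * (1 - x) ^ m := (dvd_pow h hm.ne').mul_left _
    have h2 := (Int.ModEq.dvd_iff (key.of_dvd hpp)).mp h0
    have h3 : (p : ℤ) ∣ 1 := by
      rw [← hεε]; exact ((dvd_neg.mp h2).mul_left _)
    exact hP.not_dvd_one h3
  have hx1 : ¬ (p : ℤ) ∣ x - 1 := by
    rwa [← dvd_neg, neg_sub]
  refine ⟨?_, hx1, x - 1, ?_⟩
  · have e1 := (key.mul_left (x ^ k)).mul_right (-ε)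
    have e2 := hxkl.mul_right ((1 - x) ^ m * (-ε))
    rw [pow_add] at e2
    rw [show x ^ k * (-ε) * (-ε) = x ^ k by linear_combination x ^ k * hεε] at e1
    refine e1.symm.trans ?_
    convert e2 using 1 <;> ring
  · have hev : Even (p - 1) := by
      obtain ⟨r, hr⟩ := hodd
      exact ⟨r, by omega⟩
    have hu1 : (x - 1) ^ (p - 1) ≡ 1 [ZMOD (p : ℤ)] :=
      Int.ModEq.pow_card_sub_one_eq_one hp
        ((Nat.prime_iff_prime_int.mp hp).coprime_iff_not_dvd.mpr hx1).symm
    have hu2 : ((x - 1) ^ (p - 1)) ^ m ≡ 1 [ZMOD (p : ℤ) ^ 2] := by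
      have e1 := key.pow (p - 1)
      have e2 := (hxpow.pow l).mul_right (((x - 1) ^ (p - 1)) ^ m)
      have e3 : (-ε) ^ (p - 1) = 1 := by
        rw [hev.neg_pow]
        rcases hε with rfl | rfl
        · simp
        · exact hev.neg_one_pow
      have e4 : (1 - x) ^ (p - 1) = (x - 1) ^ (p - 1) := by
        rw [← neg_sub, hev.neg_pow]
      rw [e3, mul_pow, pow_right_comm, pow_right_comm (1 - x), e4] at e1
      rw [one_pow, one_mul] at e2
      exact e2.symm.trans e1
    have hu := (aux_one_s6 p _ hP m hpm hu1 hu2).mul_right (x - 1)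
    rw [← pow_succ, Nat.sub_add_cancel hp1, one_mul] at hu
    exact hu.symm
end

section
/- Let p be an odd prime, let ε ∈ {−1,1}, and let m and n be positive integers with m < n, p ∤ m, p ∤ n, and p² ∣ D_ε(n,m). Let x be the unique p-th power modulo p² with x ≡ 1 − m·n⁻¹ (mod p), let k ≡ m − n (mod p−1), and let u be an integer with u(1−x) ≡ 1 (mod p²). Then (m−k)p − m·u·(p−1) ≡ n (mod p(p−1)); that is, the map β_{p,m,ε} inverts the map α_{p,m,ε}. -/
/-- Let `p` be an odd prime and suppose `p² ∣ D_ε(n,m)` with `p ∤ m`, `p ∤ n`.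
Let `x` be the unique `p`-th power modulo `p²` (equivalently, `x^(p−1) ≡ 1 (mod p²)`)
with `x ≡ 1 − m·n⁻¹ (mod p)`, let `k ≡ m − n (mod p−1)`, and let `u` satisfy
`u·(1−x) ≡ 1 (mod p²)`.  Then `(m−k)p − m·u·(p−1) ≡ n (mod p(p−1))`;
that is, `β_{p,m,ε}` inverts `α_{p,m,ε}`. -/
theorem beta_inverts_alpha (p : ℕ) (hp : p.Prime) (hodd : Odd p)
    (ε : ℤ) (hε : ε = 1 ∨ ε = -1)
    (m n : ℕ) (hm : 0 < m) (hmn : m < n)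
    (hpm : ¬ (p : ℤ) ∣ (m : ℤ)) (hpn : ¬ (p : ℤ) ∣ (n : ℤ))
    (hD : (p : ℤ) ^ 2 ∣ trinomialD ε n m)
    (ninv : ℤ) (hninv : (n : ℤ) * ninv ≡ 1 [ZMOD ((p : ℤ) ^ 2)])
    (x : ℤ) (hxpow : x ^ (p - 1) ≡ 1 [ZMOD ((p : ℤ) ^ 2)])
    (hx : x ≡ 1 - (m : ℤ) * ninv [ZMOD (p : ℤ)])
    (k : ℤ) (hk : k ≡ (m : ℤ) - (n : ℤ) [ZMOD ((p : ℤ) - 1)])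
    (u : ℤ) (hu : u * (1 - x) ≡ 1 [ZMOD ((p : ℤ) ^ 2)]) :
    ((m : ℤ) - k) * p - (m : ℤ) * u * ((p : ℤ) - 1) ≡ (n : ℤ)
      [ZMOD ((p : ℤ) * ((p : ℤ) - 1))] := by
  have hpp : (p : ℤ) ∣ (p : ℤ) ^ 2 := Dvd.intro_left _ (by ring : (p : ℤ) * p = _)
  have h1 := hpp.trans (Int.modEq_iff_dvd.1 hninv)
  have h2 := hpp.trans (Int.modEq_iff_dvd.1 hu)
  have h3 := Int.modEq_iff_dvd.1 hx
  have h4 := Int.modEq_iff_dvd.1 hk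
  obtain ⟨a, ha⟩ := h1
  obtain ⟨b, hb⟩ := h2
  obtain ⟨c, hc⟩ := h3
  obtain ⟨d, hd⟩ := h4
  apply Int.modEq_iff_dvd.2
  apply IsCoprime.mul_dvd
  · exact ⟨1, -1, by ring⟩
  · refine ⟨-((m : ℤ) - k) + m * u + n * b - m * u * a + n * u * c, ?_⟩
    linear_combination (n : ℤ) * hb - m * u * ha + n * u * hc
  · refine ⟨-((m : ℤ) - k) + m * u - d, ?_⟩
    linear_combination -hd
end

section
/- Let p be a prime in 𝒫_cons. Then there exists an integer x such that x and 1 − x are both nonzero p-th powers modulo p² and the multiplicative order of 1 − x modulo p² is even. -/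
/-- If `p ∈ 𝒫_cons` (there exist consecutive nonzero `p`-th powers modulo `p²`),
then there exists an integer `x` such that `x` and `1 − x` are both nonzero `p`-th
powers modulo `p²` and the multiplicative order of `1 − x` modulo `p²` is even. -/
theorem finicky_sign_solution (p : ℕ) (hp : p.Prime)
    (hcons : ∃ x y : ℤ, IsNonzeroPthPower p x ∧ IsNonzeroPthPower p y ∧
      y ≡ x + 1 [ZMOD ((p : ℤ) ^ 2)]) :
    ∃ x : ℤ, IsNonzeroPthPower p x ∧ IsNonzeroPthPower p (1 - x) ∧
      Even (orderOf (((1 - x : ℤ) : ZMod (p ^ 2)))) := by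
  obtain ⟨x, y, ⟨hx, a, ha⟩, ⟨hy, c, hc⟩, hxy⟩ := hcons
  have hpi : Prime (p : ℤ) := Nat.prime_iff_prime_int.mp hp
  have hpp : (p : ℤ) ∣ (p : ℤ) ^ 2 := dvd_pow_self _ two_ne_zero
  have key : ∀ u v : ℤ, u ≡ v [ZMOD ((p : ℤ) ^ 2)] → ¬ (p : ℤ) ∣ v → ¬ (p : ℤ) ∣ u := by
    intro u v h hv hu
    exact hv ((Int.ModEq.dvd_iff (h.of_dvd hpp)).mp hu)
  have hodd : Odd p := by
    rcases hp.eq_two_or_odd' with h | h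
    · exfalso
      subst h
      have h2 := hxy.of_dvd hpp
      unfold Int.ModEq at h2
      push_cast at *
      omega
    · exact h
  have hu1 : 1 - y ≡ -x [ZMOD ((p : ℤ) ^ 2)] := by
    have := (Int.ModEq.refl 1).sub hxy
    simpa using this
  have hu : IsNonzeroPthPower p (1 - y) := by
    refine ⟨key _ _ hu1 (by simpa using hx), -a, hu1.trans ?_⟩
    rw [hodd.neg_pow]
    exact ha.neg
  by_cases h1 : Even (orderOf (((1 - y : ℤ) : ZMod (p ^ 2))))
  · exact ⟨y, ⟨hy, c, hc⟩, hu, h1⟩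
  by_cases h2 : Even (orderOf (((1 - (1 - y) : ℤ) : ZMod (p ^ 2))))
  · exact ⟨1 - y, hu, by rw [sub_sub_cancel]; exact ⟨hy, c, hc⟩, h2⟩
  rw [sub_sub_cancel] at h2
  have hap : ¬ (p : ℤ) ∣ a := fun h => key _ _ ha.symm hx (dvd_pow h hp.ne_zero)
  have hcop : IsCoprime a ((p : ℤ) ^ 2) :=
    ((hpi.coprime_iff_not_dvd.mpr hap).symm).pow_right
  have hcp : ¬ (p : ℤ) ∣ c := fun h => key _ _ hc.symm hy (dvd_pow h hp.ne_zero)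
  obtain ⟨b, t, hbt⟩ := hcop
  have hb : b * a ≡ 1 [ZMOD ((p : ℤ) ^ 2)] := by
    rw [Int.modEq_iff_dvd]
    exact ⟨t, by linarith⟩
  have hbp : ¬ (p : ℤ) ∣ b := fun h =>
    key _ _ hb (fun h => hpi.not_isUnit (isUnit_of_dvd_one h)) (h.mul_right a)
  have hbap : b ^ p * a ^ p ≡ 1 [ZMOD ((p : ℤ) ^ 2)] := by
    simpa [mul_pow] using hb.pow p
  have hca : c ^ p ≡ a ^ p + 1 [ZMOD ((p : ℤ) ^ 2)] :=
    hc.symm.trans (hxy.trans (ha.add_right 1))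
  have hz : 1 - (-b) ^ p ≡ (b * c) ^ p [ZMOD ((p : ℤ) ^ 2)] := by
    rw [hodd.neg_pow, mul_pow]
    calc 1 - -b ^ p = 1 + b ^ p := by ring
      _ ≡ b ^ p * a ^ p + b ^ p [ZMOD ((p : ℤ) ^ 2)] := hbap.symm.add_right _
      _ = b ^ p * (a ^ p + 1) := by ring
      _ ≡ b ^ p * c ^ p [ZMOD ((p : ℤ) ^ 2)] := hca.symm.mul_left _
  refine ⟨(-b) ^ p, ⟨fun h => hbp (by simpa using hpi.dvd_of_dvd_pow h), -b, rfl⟩,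
    ⟨key _ _ hz fun h => ?_, b * c, hz⟩, ?_⟩
  · rcases hpi.dvd_or_dvd (hpi.dvd_of_dvd_pow h) with h | h
    · exact hbp h
    · exact hcp h
  by_contra h3
  have hzu : (1 - (-b) ^ p) * (1 - y) ≡ -y [ZMOD ((p : ℤ) ^ 2)] := by
    calc (1 - (-b) ^ p) * (1 - y) ≡ (b * c) ^ p * -a ^ p [ZMOD ((p : ℤ) ^ 2)] :=
          hz.mul (hu1.trans ha.neg)
      _ = -((b ^ p * a ^ p) * c ^ p) := by ring
      _ ≡ -(1 * y) [ZMOD ((p : ℤ) ^ 2)] := (hbap.mul hc.symm).neg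
      _ = -y := by ring
  have hzu' : (((1 - (-b) ^ p : ℤ)) : ZMod (p ^ 2)) * ((1 - y : ℤ) : ZMod (p ^ 2))
      = -((y : ℤ) : ZMod (p ^ 2)) := by
    rw [← Int.cast_mul, ← Int.cast_neg, ZMod.intCast_eq_intCast_iff]
    push_cast
    exact hzu
  generalize (((1 - (-b) ^ p : ℤ)) : ZMod (p ^ 2)) = Z at *
  generalize ((1 - y : ℤ) : ZMod (p ^ 2)) = U at *
  generalize ((y : ℤ) : ZMod (p ^ 2)) = V at *
  rw [Nat.not_even_iff_odd] at h1 h2 h3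
  have e := congrArg (· ^ (orderOf Z * orderOf U * orderOf V)) hzu'
  simp only [mul_pow, ((h3.mul h1).mul h2).neg_pow] at e
  have e1 : Z ^ (orderOf Z * orderOf U * orderOf V) = 1 :=
    orderOf_dvd_iff_pow_eq_one.mp ⟨orderOf U * orderOf V, by ring⟩
  have e2 : U ^ (orderOf Z * orderOf U * orderOf V) = 1 :=
    orderOf_dvd_iff_pow_eq_one.mp ⟨orderOf Z * orderOf V, by ring⟩
  have e3 : V ^ (orderOf Z * orderOf U * orderOf V) = 1 :=
    orderOf_dvd_iff_pow_eq_one.mp ⟨orderOf Z * orderOf U, by ring⟩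
  rw [e1, e2, e3, mul_one] at e
  have h4 : ((2 : ℕ) : ZMod (p ^ 2)) = 0 := by
    push_cast
    linear_combination e
  rw [ZMod.natCast_eq_zero_iff] at h4
  have := Nat.le_of_dvd two_pos h4
  have := hp.two_le
  nlinarith
end

section
/- Let p ≡ 1 (mod 6) be a prime with p > 3, and let x be an integer whose multiplicative order modulo p² equals 6. Then x − 1 has multiplicative order 3 modulo p², and both x and x − 1 are nonzero p-th powers modulo p². -/
theorem aux_split (p : ℕ) (hp : p.Prime) (a b : ℤ) (h : (p : ℤ) ^ 2 ∣ a * b)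
    (hn : (p : ℤ) ∣ a → ¬ (p : ℤ) ∣ b) : (p : ℤ) ^ 2 ∣ a ∨ (p : ℤ) ^ 2 ∣ b := by
  have hP : Prime (p : ℤ) := Nat.prime_iff_prime_int.mp hp
  by_cases ha : (p : ℤ) ∣ a
  · left
    exact hP.pow_dvd_of_dvd_mul_right 2 (hn ha) h
  · right
    exact hP.pow_dvd_of_dvd_mul_left 2 ha h

/-- Let `p ≡ 1 (mod 6)` be a prime with `p > 3`, and let `x` be an integer whose
multiplicative order modulo `p²` equals `6`.  Then `x − 1` has multiplicative
order `3` modulo `p²`, and both `x` and `x − 1` are nonzero `p`-th powers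
modulo `p²`. -/
theorem sixth_and_cube_roots (p : ℕ) (hp : p.Prime) (hp6 : p % 6 = 1) (hp3 : 3 < p)
    (x : ℤ) (hx : orderOf ((x : ZMod (p ^ 2))) = 6) :
    orderOf (((x - 1 : ℤ) : ZMod (p ^ 2))) = 3 ∧
      IsNonzeroPthPower p x ∧ IsNonzeroPthPower p (x - 1) := by
  have hz : ∀ a : ℤ, ((a : ℤ) : ZMod (p ^ 2)) = 0 ↔ (p : ℤ) ^ 2 ∣ a := by
    intro a
    have := CharP.intCast_eq_zero_iff (ZMod (p ^ 2)) (p ^ 2) a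
    push_cast at this
    exact this
  have hsm : ∀ n : ℤ, 0 < n → n ≤ 3 → ¬ (p : ℤ) ∣ n := by
    intro n h0 h3 hd
    have := Int.le_of_dvd h0 hd
    omega
  have h6 : ((x : ZMod (p ^ 2))) ^ 6 = 1 := hx ▸ pow_orderOf_eq_one _
  have hne : ∀ k : ℕ, 0 < k → k < 6 → ((x : ZMod (p ^ 2))) ^ k ≠ 1 := by
    intro k h0 hk h
    have := orderOf_le_of_pow_eq_one h0 h
    omega
  have hpp : (p : ℤ) ∣ (p : ℤ) ^ 2 := dvd_pow_self _ two_ne_zero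
  have d6 : (p : ℤ) ^ 2 ∣ (x ^ 3 - 1) * (x ^ 3 + 1) := by
    rw [← hz]; push_cast; linear_combination h6
  have d3 : (p : ℤ) ^ 2 ∣ (x + 1) * (x ^ 2 - x + 1) := by
    rcases aux_split p hp _ _ d6 (fun h1 h2 => hsm 2 (by norm_num) (by norm_num) (by
      have := dvd_sub h2 h1
      ring_nf at this
      exact this)) with h | h
    · rw [← hz] at h
      push_cast at h
      exact absurd (sub_eq_zero.mp h) (hne 3 (by norm_num) (by norm_num))
    · convert h using 1; ring
  have d2 : (p : ℤ) ^ 2 ∣ x ^ 2 - x + 1 := by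
    rcases aux_split p hp _ _ d3 (fun h1 h2 => hsm 3 (by norm_num) (by norm_num) (by
      have := dvd_sub h2 (h1.mul_right (x - 2))
      ring_nf at this
      exact this)) with h | h
    · rw [← hz] at h
      push_cast at h
      refine absurd ?_ (hne 2 (by norm_num) (by norm_num))
      linear_combination ((x : ZMod (p ^ 2)) - 1) * h
    · exact h
  have e2 : ((x - 1 : ℤ) : ZMod (p ^ 2)) = (x : ZMod (p ^ 2)) ^ 2 := by
    have := (hz _).mpr d2
    push_cast at this ⊢
    linear_combination -this
  have hxp : (x : ZMod (p ^ 2)) ^ p = x := by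
    have hk : p = 6 * (p / 6) + 1 := by omega
    have : ∀ m : ℕ, m = 6 * (p / 6) + 1 → (x : ZMod (p ^ 2)) ^ m = x := by
      rintro m rfl
      rw [pow_succ (x : ZMod (p ^ 2)) (6 * (p / 6)), pow_mul (x : ZMod (p ^ 2)) 6, h6, one_pow, one_mul]
    exact this p hk
  have hpow : ∀ y : ℤ, (y : ZMod (p ^ 2)) ^ p = y → y ≡ y ^ p [ZMOD ((p : ℤ) ^ 2)] := by
    intro y hy
    rw [Int.modEq_iff_dvd, ← hz]
    push_cast
    rw [hy, sub_self]
  have dp := hpp.trans d2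
  refine ⟨?_, ⟨?_, x, hpow x hxp⟩, ⟨?_, x - 1, hpow _ ?_⟩⟩
  · rw [e2, orderOf_pow' _ two_ne_zero, hx]
    norm_num
  · intro h
    apply hsm 1 (by norm_num) (by norm_num)
    have := dvd_sub dp (h.mul_right (x - 1))
    ring_nf at this
    exact this
  · intro h
    apply hsm 1 (by norm_num) (by norm_num)
    have := dvd_sub dp (h.mul_right x)
    ring_nf at this
    exact this
  · rw [e2, pow_right_comm, hxp]
end

section
/- Let k be a positive integer, set n = 8^(7^k), and define a = (n−1)^(n−1), b = n^n − (n−1)^(n−1), and c = n^n. Then a, b, c are pairwise relatively prime positive integers with a + b = c, the radical of abc satisfies rad(abc) < 6b/(7^k·n), and consequently rad(abc) < 6·(log 8)·c/ log c. -/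
/-- The radical of a positive integer: the product of its distinct prime factors. -/
def rad (N : ℕ) : ℕ := N.primeFactors.prod id

lemma aux_pow_s13 (m x : ℤ) (t : ℕ) : m ^ 2 ∣ (1 + m * x) ^ t - (1 + t * (m * x)) := by
  induction t with
  | zero => simp
  | succ t ih =>
    obtain ⟨q, hq⟩ := ih
    refine ⟨q * (1 + m * x) + t * x ^ 2, ?_⟩
    have h : (1 + m * x) ^ t = m ^ 2 * q + (1 + t * (m * x)) := by linarith
    rw [pow_succ, h]
    push_cast
    ring

lemma aux_dvd_s13 (t : ℕ) : (12 * (t : ℤ) ^ 2 + 6 * t + 1) ^ 2 ∣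
    (6 * (t : ℤ) + 2) ^ (6 * t + 2) - (6 * (t : ℤ) + 1) ^ (6 * t + 1) := by
  obtain ⟨m, hm⟩ : ∃ m : ℤ, m = 12 * (t : ℤ) ^ 2 + 6 * t + 1 := ⟨_, rfl⟩
  obtain ⟨n, hn⟩ : ∃ n : ℤ, n = 6 * (t : ℤ) + 2 := ⟨_, rfl⟩
  have h3 : n ^ 2 = n - 1 + 3 * m := by subst hm hn; ring
  have e1 : n ^ 6 = 1 + m * (-6 * (n + 1) + 9 * m * (n + 1) ^ 2) := by
    have : n ^ 3 = -1 + 3 * m * (n + 1) := by subst hm hn; ring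
    calc n ^ 6 = (n ^ 3) ^ 2 := by ring
      _ = _ := by rw [this]; ring
  have e2 : (n - 1) ^ 6 = 1 + m * (6 * (n - 2) + 9 * m * (n - 2) ^ 2) := by
    have : (n - 1) ^ 3 = 1 + 3 * m * (n - 2) := by subst hm hn; ring
    calc (n - 1) ^ 6 = ((n - 1) ^ 3) ^ 2 := by ring
      _ = _ := by rw [this]; ring
  obtain ⟨q1, h1⟩ := aux_pow_s13 m (-6 * (n + 1) + 9 * m * (n + 1) ^ 2) t
  obtain ⟨q2, h2⟩ := aux_pow_s13 m (6 * (n - 2) + 9 * m * (n - 2) ^ 2) t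
  rw [← e1] at h1
  rw [← e2] at h2
  have h61 : 6 * (t : ℤ) + 1 = n - 1 := by linarith
  rw [← hm, h61, ← hn, pow_add, pow_mul, pow_add, pow_mul, pow_one]
  have g1 : (n ^ 6) ^ t = m ^ 2 * q1 + (1 + t * (m * (-6 * (n + 1) + 9 * m * (n + 1) ^ 2))) := by
    linarith
  have g2 : ((n - 1) ^ 6) ^ t
      = m ^ 2 * q2 + (1 + t * (m * (6 * (n - 2) + 9 * m * (n - 2) ^ 2))) := by linarith
  rw [g1, g2]
  have key : m ∣ 3 + n ^ 2 * (-6 * t * (n + 1)) - (n - 1) * (6 * t * (n - 2)) := by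
    have ht : 6 * (t : ℤ) = n - 2 := by linarith
    have : 3 + n ^ 2 * (-6 * t * (n + 1)) - (n - 1) * (6 * t * (n - 2))
      = 3 - n ^ 2 * ((6 * t) * (n + 1)) - (n - 1) * ((6 * t) * (n - 2)) := by ring
    rw [this, ht]
    refine ⟨3 * (-n ^ 2 - n + 7), ?_⟩
    have : 3 * m = n ^ 2 - n + 1 := by linarith
    calc _ = (n ^ 2 - n + 1) * (-n ^ 2 - n + 7) + 0 := by ring
      _ = _ := by rw [← this]; ring
  obtain ⟨q3, h4⟩ := key
  refine ⟨n ^ 2 * q1 - (n - 1) * q2 + q3 + 9 * t * (n ^ 2 * (n + 1) ^ 2 - (n - 1) * (n - 2) ^ 2), ?_⟩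
  linear_combination h3 + m * h4

lemma aux_rad (N K : ℕ) (hK : K ≠ 0) (h : ∀ p, p.Prime → p ∣ N → p ∣ K) : rad N ≤ K := by
  have hs : N.primeFactors ⊆ K.primeFactors := by
    intro p hp
    have := Nat.prime_of_mem_primeFactors hp
    exact Nat.mem_primeFactors.2 ⟨this, h p this (Nat.dvd_of_mem_primeFactors hp), hK⟩
  have h1 : rad N ∣ ∏ p ∈ K.primeFactors, p := Finset.prod_dvd_prod_of_subset _ _ _ hs
  exact Nat.le_of_dvd (Nat.pos_of_ne_zero hK) (h1.trans (Nat.prod_primeFactors_dvd K))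

/-- Let `k ≥ 1`, `n = 8^(7^k)`, `a = (n−1)^(n−1)`, `b = n^n − (n−1)^(n−1)`,
`c = n^n`.  Then `a`, `b`, `c` are pairwise relatively prime positive integers
with `a + b = c`, `rad(abc) < 6b/(7^k·n)`, and `rad(abc) < 6·(log 8)·c/log c`. -/
theorem abc_pomerance (k : ℕ) (hk : 0 < k) (n a b c : ℕ)
    (hn : n = 8 ^ (7 ^ k)) (ha : a = (n - 1) ^ (n - 1))
    (hb : b = n ^ n - (n - 1) ^ (n - 1)) (hc : c = n ^ n) :
    Nat.Coprime a b ∧ Nat.Coprime a c ∧ Nat.Coprime b c ∧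
      0 < a ∧ 0 < b ∧ 0 < c ∧ a + b = c ∧
      (rad (a * b * c) : ℝ) < 6 * b / (7 ^ k * n) ∧
      (rad (a * b * c) : ℝ) < 6 * Real.log 8 * c / Real.log c := by
  have h7 : 7 ^ k ≠ 0 := by positivity
  have hn8 : 8 ≤ n := by rw [hn]; exact Nat.le_self_pow h7 8
  have hmod : n % 6 = 2 := by
    have : ∀ j : ℕ, 8 ^ (2 * j + 1) % 6 = 2 := by
      intro j
      induction j with
      | zero => rfl
      | succ j ih => rw [show 2 * (j + 1) + 1 = (2 * j + 1) + 2 by ring, pow_add, Nat.mul_mod, ih]; norm_num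
    obtain ⟨j, hj⟩ : Odd (7 ^ k) := Odd.pow (by decide)
    rw [hn, hj]; exact this j
  have hdvd : 7 ^ (k + 1) ∣ n - 1 := by
    have h := dvd_sub_pow_of_dvd_sub (R := ℤ) (p := 7) (a := 8) (b := 1) (by norm_num) k
    zify [show 1 ≤ n by omega]
    rw [hn]
    simpa using h
  have hp2 : ∀ p : ℕ, p.Prime → p ∣ n → p = 2 := by
    intro p hp h
    rw [hn] at h
    have h8 : p ∣ 2 ^ 3 := by simpa using hp.dvd_of_dvd_pow h
    exact (Nat.prime_dvd_prime_iff_eq hp Nat.prime_two).1 (hp.dvd_of_dvd_pow h8)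
  have hlog : Real.log n = 7 ^ k * Real.log 8 := by
    rw [hn]; push_cast; rw [Real.log_pow]; push_cast; rfl
  clear hn
  obtain ⟨r, hr⟩ := hdvd
  obtain ⟨t, rfl⟩ : ∃ t, n = 6 * t + 2 := ⟨n / 6, by omega⟩
  have hn1 : 6 * t + 2 - 1 = 6 * t + 1 := by omega
  rw [hn1] at ha hb hr
  have hlt : a < c := by
    rw [ha, hc]
    calc (6 * t + 1) ^ (6 * t + 1) < (6 * t + 2) ^ (6 * t + 1) :=
          Nat.pow_lt_pow_left (by omega) (by omega)
      _ ≤ _ := Nat.pow_le_pow_right (by omega) (by omega)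
  have hbc : b = c - a := by rw [hb, ha, hc]
  have hab : a + b = c := by omega
  have hapos : 0 < a := by rw [ha]; positivity
  have hbpos : 0 < b := by omega
  have hac : Nat.Coprime a c := by
    rw [ha, hc]
    apply Nat.Coprime.pow
    exact (Nat.coprime_self_add_right (m := 6 * t + 1) (n := 1)).2 (Nat.coprime_one_right _)
  have hcab : Nat.Coprime a b := by
    rw [← hab] at hac
    simpa using hac
  have hbcc : Nat.Coprime b c := by
    rw [← hab]; simpa using hcab.symm
  have hdb : (12 * t ^ 2 + 6 * t + 1) ^ 2 ∣ b := by
    have h := aux_dvd_s13 t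
    zify
    have : (b : ℤ) = (6 * (t : ℤ) + 2) ^ (6 * t + 2) - (6 * (t : ℤ) + 1) ^ (6 * t + 1) := by
      have h1 : (b : ℤ) = c - a := by omega
      rw [h1, hc, ha]; push_cast; rfl
    rw [this]; exact h
  obtain ⟨m, hm⟩ : ∃ m, m = 12 * t ^ 2 + 6 * t + 1 := ⟨_, rfl⟩
  rw [← hm] at hdb
  obtain ⟨s, hs⟩ := hdb
  have hspos : 0 < s := by
    rcases Nat.eq_zero_or_pos s with h | h
    · subst h; omega
    · exact h
  have hrpos : 0 < r := by
    rcases Nat.eq_zero_or_pos r with h | h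
    · subst h; omega
    · exact h
  have hmpos : 0 < m := by omega
  have hrad : rad (a * b * c) ≤ 2 * (7 * r) * (m * s) := by
    apply aux_rad _ _ (by positivity)
    intro p hp h
    rcases hp.dvd_mul.1 h with h | h
    · rcases hp.dvd_mul.1 h with h | h
      · rw [ha] at h
        have h := hp.dvd_of_dvd_pow h
        rw [hr, pow_succ, mul_assoc] at h
        refine Dvd.dvd.mul_right (Dvd.dvd.mul_left ?_ _) _
        rcases hp.dvd_mul.1 h with h | h
        · exact Dvd.dvd.mul_right (hp.dvd_of_dvd_pow h) _
        · exact h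
      · rw [hs] at h
        refine Dvd.dvd.mul_left ?_ _
        rcases hp.dvd_mul.1 h with h | h
        · exact Dvd.dvd.mul_right (hp.dvd_of_dvd_pow h) _
        · exact Dvd.dvd.mul_left h _
    · rw [hc] at h
      have := hp2 p hp (hp.dvd_of_dvd_pow h)
      rw [this, mul_assoc]
      exact Dvd.intro _ rfl
  have hmain : 2 * (7 * r) * (m * s) * (7 ^ k * (6 * t + 2)) < 6 * b := by
    have e : 2 * (7 * r) * (m * s) * (7 ^ k * (6 * t + 2))
        = 2 * (m * s) * ((6 * t + 1) * (6 * t + 2)) := by rw [hr]; ring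
    have e' : 6 * b = 2 * (m * s) * (3 * m) := by rw [hs]; ring
    rw [e, e']
    apply Nat.mul_lt_mul_of_pos_left _ (by positivity)
    rw [hm]; nlinarith
  have hD : (0 : ℝ) < 7 ^ k * ((6 * t + 2 : ℕ) : ℝ) := by positivity
  have hfin : (rad (a * b * c) : ℝ) < 6 * b / (7 ^ k * ((6 * t + 2 : ℕ) : ℝ)) := by
    rw [lt_div_iff₀ hD]
    have : rad (a * b * c) * (7 ^ k * (6 * t + 2)) < 6 * b :=
      lt_of_le_of_lt (Nat.mul_le_mul_right _ hrad) hmain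
    exact_mod_cast this
  refine ⟨hcab, hac, hbcc, hapos, hbpos, by omega, hab, hfin, hfin.trans ?_⟩
  have hl8 : 0 < Real.log 8 := Real.log_pos (by norm_num)
  have hlc : Real.log c = (7 ^ k * ((6 * t + 2 : ℕ) : ℝ)) * Real.log 8 := by
    rw [hc, Nat.cast_pow, Real.log_pow, hlog]; ring
  rw [hlc, show 6 * Real.log 8 * (c : ℝ) = (6 * c) * Real.log 8 by ring,
    mul_div_mul_right _ _ hl8.ne']
  have : (b : ℝ) < c := by exact_mod_cast (show b < c by omega)
  gcongr
end

section
/- Let p be an odd prime and let x be an integer with f_p(x) ≡ 0 (mod p). Then f_p(−x−1) ≡ 0 (mod p). Moreover, if p ∤ x and x′ is any integer with x·x′ ≡ 1 (mod p), then f_p(x′) ≡ 0 (mod p). -/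
/-- The value at `x` of the integer polynomial `f_p(X) = ((X+1)^p − X^p − 1)/p`
(the integer division is exact by Fermat's little theorem). -/
def fpVal (p : ℕ) (x : ℤ) : ℤ := ((x + 1) ^ p - x ^ p - 1) / (p : ℤ)

theorem fpVal_iff_aux (p : ℕ) (hp : p.Prime) (x : ℤ) :
    fpVal p x ≡ 0 [ZMOD (p : ℤ)] ↔ (p : ℤ) ^ 2 ∣ (x + 1) ^ p - x ^ p - 1 := by
  haveI := Fact.mk hp
  have hd : (p : ℤ) ∣ (x + 1) ^ p - x ^ p - 1 := by
    rw [← ZMod.intCast_zmod_eq_zero_iff_dvd]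
    push_cast
    rw [ZMod.pow_card, ZMod.pow_card]
    ring
  have hp0 : (p : ℤ) ≠ 0 := by exact_mod_cast hp.ne_zero
  obtain ⟨c, hc⟩ := hd
  rw [fpVal, Int.modEq_zero_iff_dvd, hc, Int.mul_ediv_cancel_left _ hp0, pow_two,
    mul_dvd_mul_iff_left hp0]

/-- Let `p` be an odd prime and `x` an integer with `f_p(x) ≡ 0 (mod p)`.  Then
`f_p(−x−1) ≡ 0 (mod p)`; moreover, if `p ∤ x` and `x·x′ ≡ 1 (mod p)`, then
`f_p(x′) ≡ 0 (mod p)`. -/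
theorem orbit_multiple_roots (p : ℕ) (hp : p.Prime) (hodd : Odd p)
    (x : ℤ) (hx : fpVal p x ≡ 0 [ZMOD (p : ℤ)]) :
    fpVal p (-x - 1) ≡ 0 [ZMOD (p : ℤ)] ∧
      (¬ (p : ℤ) ∣ x → ∀ x' : ℤ, x * x' ≡ 1 [ZMOD (p : ℤ)] →
        fpVal p x' ≡ 0 [ZMOD (p : ℤ)]) := by
  rw [fpVal_iff_aux p hp] at hx
  refine ⟨?_, ?_⟩
  · rw [fpVal_iff_aux p hp]
    have e1 : (-x - 1 + 1 : ℤ) ^ p = -x ^ p := by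
      rw [show (-x - 1 + 1 : ℤ) = -x by ring, hodd.neg_pow]
    have e2 : (-x - 1 : ℤ) ^ p = -(x + 1) ^ p := by
      rw [show (-x - 1 : ℤ) = -(x + 1) by ring, hodd.neg_pow]
    rw [e1, e2]
    convert hx using 1
    ring
  · intro hpx x' hxx
    rw [fpVal_iff_aux p hp]
    have hd : (p : ℤ) ∣ x * x' - 1 := hxx.symm.dvd
    have h1 : (p : ℤ) ^ 2 ∣ (x * x') ^ p - 1 ^ p := by
      simpa using dvd_sub_pow_of_dvd_sub hd 1
    have h2 : (p : ℤ) ^ 2 ∣ (x * x' + x) ^ p - (x + 1) ^ p := by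
      have hd' : (p : ℤ) ∣ (x * x' + x) - (x + 1) := by
        convert hd using 1
        ring
      simpa using dvd_sub_pow_of_dvd_sub hd' 1
    have hcop : IsCoprime ((p : ℤ) ^ 2) (x ^ p) :=
      IsCoprime.pow (((Nat.prime_iff_prime_int.mp hp).coprime_iff_not_dvd).mpr hpx)
    apply hcop.dvd_of_dvd_mul_left
    have e : x ^ p * ((x' + 1) ^ p - x' ^ p - 1) =
        ((x * x' + x) ^ p - (x + 1) ^ p) - ((x * x') ^ p - 1 ^ p)
          + ((x + 1) ^ p - x ^ p - 1) := by
      rw [show x * x' + x = x * (x' + 1) by ring, mul_pow, mul_pow, one_pow]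
      ring
    rw [e]
    exact dvd_add (dvd_sub h2 h1) hx
end

section
/- Let p be an odd prime that is not a Wieferich prime (i.e., p² ∤ 2^p − 2), and let x be an element of ℤ/pℤ with x ≠ 0, x ≠ −1, and x² + x + 1 ≠ 0, such that the reduction of f_p modulo p vanishes at x. Then the six elements x, −x−1, −(x+1)⁻¹, −x·(x+1)⁻¹, −(x+1)·x⁻¹, x⁻¹ of ℤ/pℤ are pairwise distinct, and the reduction of f_p modulo p vanishes at every one of them. -/
/-- The value at `x ∈ ℤ/pℤ` of the reduction of `f_p` modulo `p`, computed via
the canonical lift (reduction commutes with evaluation at any lift). -/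
def fpBar (p : ℕ) (x : ZMod p) : ZMod p := ((fpVal p ((x.val : ℤ))) : ZMod p)

theorem fp_aux_iff (p : ℕ) (hp : p.Prime) (y : ZMod p) (a : ℤ) (ha : (a : ZMod p) = y) :
    fpBar p y = 0 ↔ (p : ℤ) ^ 2 ∣ (a + 1) ^ p - a ^ p - 1 := by
  have : Fact p.Prime := ⟨hp⟩
  have hp0 : (p : ℤ) ≠ 0 := by exact_mod_cast hp.ne_zero
  obtain ⟨c, hc⟩ : ∃ c : ℤ, c = (y.val : ℤ) := ⟨_, rfl⟩
  have hcy : (c : ZMod p) = y := by rw [hc]; simp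
  have hd : (p : ℤ) ∣ (c + 1) ^ p - c ^ p - 1 := by
    rw [← ZMod.intCast_zmod_eq_zero_iff_dvd]
    push_cast
    simp [ZMod.pow_card]
  have hac : (p : ℤ) ∣ a - c := by
    rw [← ZMod.intCast_zmod_eq_zero_iff_dvd]
    push_cast
    rw [ha, hcy, sub_self]
  have e1 : (p : ℤ) ^ 2 ∣ a ^ p - c ^ p := by
    simpa using dvd_sub_pow_of_dvd_sub hac 1
  have e2 : (p : ℤ) ^ 2 ∣ (a + 1) ^ p - (c + 1) ^ p := by
    have : (p : ℤ) ∣ (a + 1) - (c + 1) := by simpa using hac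
    simpa using dvd_sub_pow_of_dvd_sub this 1
  have e3 : (p : ℤ) ^ 2 ∣ ((a + 1) ^ p - a ^ p - 1) - ((c + 1) ^ p - c ^ p - 1) := by
    have e : ((a + 1) ^ p - a ^ p - 1) - ((c + 1) ^ p - c ^ p - 1)
        = ((a + 1) ^ p - (c + 1) ^ p) - (a ^ p - c ^ p) := by abel
    rw [e]
    exact dvd_sub e2 e1
  rw [dvd_iff_dvd_of_dvd_sub e3]
  unfold fpBar fpVal
  rw [← hc, ZMod.intCast_zmod_eq_zero_iff_dvd]
  obtain ⟨k, hk⟩ := hd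
  rw [hk, Int.mul_ediv_cancel_left _ hp0, pow_two]
  exact (mul_dvd_mul_iff_left hp0).symm

theorem fp_aux_neg (p : ℕ) (hp : p.Prime) (hodd : Odd p) (y : ZMod p)
    (h : fpBar p y = 0) : fpBar p (-y - 1) = 0 := by
  have : Fact p.Prime := ⟨hp⟩
  obtain ⟨a, ha⟩ := ZMod.intCast_surjective y
  rw [fp_aux_iff p hp y a ha] at h
  rw [fp_aux_iff p hp (-y - 1) (-(a + 1)) (by push_cast; rw [ha]; ring)]
  have e : -(a + 1) + 1 = -a := by ring
  rw [e, hodd.neg_pow, hodd.neg_pow]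
  convert h using 1
  ring

theorem fp_aux_inv (p : ℕ) (hp : p.Prime) (y : ZMod p) (hy : y ≠ 0)
    (h : fpBar p y = 0) : fpBar p y⁻¹ = 0 := by
  have : Fact p.Prime := ⟨hp⟩
  obtain ⟨a, ha⟩ := ZMod.intCast_surjective y
  obtain ⟨b, hb⟩ := ZMod.intCast_surjective y⁻¹
  rw [fp_aux_iff p hp y a ha] at h
  rw [fp_aux_iff p hp _ b hb]
  have hna : ¬ (p : ℤ) ∣ a := by
    rw [← ZMod.intCast_zmod_eq_zero_iff_dvd, ha]; exact hy
  have hcop : IsCoprime ((p : ℤ) ^ 2) (a ^ p) :=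
    (((Nat.prime_iff_prime_int.mp hp).coprime_iff_not_dvd).mpr hna).pow
  apply hcop.dvd_of_dvd_mul_left
  have hab : (p : ℤ) ∣ a * b - 1 := by
    rw [← ZMod.intCast_zmod_eq_zero_iff_dvd]
    push_cast
    rw [ha, hb, mul_inv_cancel₀ hy, sub_self]
  have e1 : (p : ℤ) ^ 2 ∣ (a * b) ^ p - 1 ^ p := by
    simpa using dvd_sub_pow_of_dvd_sub hab 1
  have e2 : (p : ℤ) ^ 2 ∣ (a * (b + 1)) ^ p - (a + 1) ^ p := by
    have : (p : ℤ) ∣ a * (b + 1) - (a + 1) := by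
      convert hab using 1
      ring
    simpa using dvd_sub_pow_of_dvd_sub this 1
  rw [mul_pow, one_pow] at e1
  rw [mul_pow] at e2
  have := dvd_add (dvd_sub e2 e1) h
  convert this using 1
  ring

/-- Let `p` be an odd non-Wieferich prime (`p² ∤ 2^p − 2`), and let `x ∈ ℤ/pℤ`
with `x ≠ 0`, `x ≠ −1`, `x² + x + 1 ≠ 0`, and `f̄_p(x) = 0`.  Then the six
elements `x`, `−x−1`, `−(x+1)⁻¹`, `−x·(x+1)⁻¹`, `−(x+1)·x⁻¹`, `x⁻¹` are
pairwise distinct and `f̄_p` vanishes at every one of them. -/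
theorem six_pack (p : ℕ) (hp : p.Prime) (hodd : Odd p)
    (hwief : ¬ ((p : ℤ) ^ 2 ∣ 2 ^ p - 2)) (x : ZMod p)
    (h0 : x ≠ 0) (h1 : x ≠ -1) (h5 : x ^ 2 + x + 1 ≠ 0)
    (hroot : fpBar p x = 0) :
    ([x, -x - 1, -(x + 1)⁻¹, -(x * (x + 1)⁻¹), -((x + 1) * x⁻¹), x⁻¹] : List (ZMod p)).Pairwise
        (· ≠ ·) ∧
      ∀ y ∈ ([x, -x - 1, -(x + 1)⁻¹, -(x * (x + 1)⁻¹), -((x + 1) * x⁻¹), x⁻¹] : List (ZMod p)),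
        fpBar p y = 0 := by
  have : Fact p.Prime := ⟨hp⟩
  have hx1 : x + 1 ≠ 0 := fun h => h1 (eq_neg_of_add_eq_zero_left h)
  have hS : -x - 1 ≠ 0 := fun h => hx1 (by linear_combination -h)
  have r2 := fp_aux_neg p hp hodd x hroot
  have r6 := fp_aux_inv p hp x h0 hroot
  have r3 : fpBar p (-(x + 1)⁻¹) = 0 := by
    have := fp_aux_inv p hp _ hS r2
    have e : (-x - 1)⁻¹ = -(x + 1)⁻¹ := by rw [← inv_neg]; congr 1; ring
    rwa [e] at this
  have r4 : fpBar p (-(x * (x + 1)⁻¹)) = 0 := by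
    have := fp_aux_neg p hp hodd _ r3
    have e : -(-(x + 1)⁻¹) - 1 = -(x * (x + 1)⁻¹) := by field_simp; ring
    rwa [e] at this
  have r5 : fpBar p (-((x + 1) * x⁻¹)) = 0 := by
    have := fp_aux_neg p hp hodd _ r6
    have e : -x⁻¹ - 1 = -((x + 1) * x⁻¹) := by field_simp; ring
    rwa [e] at this
  have hone : fpBar p 1 ≠ 0 := by
    intro h
    rw [fp_aux_iff p hp 1 1 (by simp)] at h
    apply hwief
    convert h using 1
    norm_num
    ring
  have n1 : x - 1 ≠ 0 := by
    intro h
    rw [sub_eq_zero.mp h] at hroot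
    exact hone hroot
  have n2 : x + 2 ≠ 0 := by
    intro h
    apply hone
    have e : -x - 1 = 1 := by linear_combination -h
    rwa [e] at r2
  have n3 : 2 * x + 1 ≠ 0 := by
    intro h
    apply hone
    have e : -((x + 1) * x⁻¹) = 1 := by
      field_simp
      linear_combination -h
    rwa [e] at r5
  refine ⟨?_, ?_⟩
  · obtain ⟨u, hu⟩ : ∃ u, u = x⁻¹ := ⟨_, rfl⟩
    obtain ⟨v, hv⟩ : ∃ v, v = (x + 1)⁻¹ := ⟨_, rfl⟩
    have hu1 : x * u = 1 := by rw [hu]; exact mul_inv_cancel₀ h0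
    have hv1 : (x + 1) * v = 1 := by rw [hv]; exact mul_inv_cancel₀ hx1
    rw [← hu, ← hv]
    clear hu hv r2 r3 r4 r5 r6 hone hroot hwief
    simp only [List.pairwise_cons, List.mem_cons, List.not_mem_nil, or_false, forall_eq_or_imp,
      forall_eq, false_imp_iff, implies_true, List.Pairwise.nil, and_true, ne_eq]
    refine ⟨⟨?_, ?_, ?_, ?_, ?_⟩, ⟨?_, ?_, ?_, ?_⟩, ⟨?_, ?_, ?_⟩, ⟨?_, ?_⟩, ?_⟩ <;> intro h <;> grind
  · simp only [List.mem_cons, List.not_mem_nil, or_false]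
    rintro y (rfl | rfl | rfl | rfl | rfl | rfl) <;> assumption
end
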